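/- Let I ⊆ R be a monomial ideal and let x_i be a variable occurring in G(I). Set q = max{deg_{x_i}(x^a) : x^a ∈ G(I)}, B_i = {x^a ∈ G(I) : deg_{x_i}(x^a) = q}, A_i = G(I) \ B_i, p = max{deg_{x_i}(x^a) : x^a ∈ A_i}, L = ({x^a/x_i : x^a ∈ B_i} ∪ A_i), and L' = ({x^a/x_i^{q−1} : x^a ∈ B_i} ∪ A_i). Then: (a) if p ≥ 1 and q − p ≥ 2, then reg(R/L) ≤ reg(R/I) ≤ reg(R/L) + 1; (b) if p ≥ 0 and q − p = 1, then reg(R/L) ≤ reg(R/I); (c) if p = 0 and q ≥ 2, then reg(R/L') ≤ reg(R/I) ≤ reg(R/L') + q − 1. -/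

import Mathlib

open MvPolynomial CategoryTheory Opposite

noncomputable section

/-- The polynomial ring `K[x_v : v ∈ σ]` over the field `K`. -/
abbrev MvPoly (K : Type) [Field K] (σ : Type) : Type := MvPolynomial σ K

variable (K : Type) [Field K] (σ : Type)

/-- The graded maximal ideal `m = (x_v : v ∈ σ)` generated by all the variables. -/
def maxIdeal : Ideal (MvPoly K σ) := Ideal.span (Set.range MvPolynomial.X)

/-- The depth of `R/I` with respect to the graded maximal ideal, defined as
`inf { i | Ext^i(R/m, R/I) ≠ 0 }` (with value `⊤` for the zero module). -/
def depthQ (I : Ideal (MvPoly K σ)) : ℕ∞ :=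
  sInf { d : ℕ∞ | ∃ i : ℕ, d = i ∧
    Nontrivial (((Ext (MvPoly K σ) (ModuleCat (MvPoly K σ)) i).obj
      (op (ModuleCat.of (MvPoly K σ) (MvPoly K σ ⧸ maxIdeal K σ)))).obj
      (ModuleCat.of (MvPoly K σ) (MvPoly K σ ⧸ I))) }

/-- The degree-`e` homogeneous component condition, for an integer `e`
(for `e < 0` the component is zero). -/
def HomogComp (e : ℤ) (p : MvPoly K σ) : Prop :=
  if 0 ≤ e then p ∈ homogeneousSubmodule σ K e.toNat else p = 0

/-- `v` is a homogeneous element of degree `e` of the graded free module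
`⊕_j R(-dg j)`. -/
def IsHomogVec {m : ℕ} (dg : Fin m → ℤ) (e : ℤ) (v : Fin m → MvPoly K σ) : Prop :=
  ∀ j, HomogComp K σ (e - dg j) (v j)

/-- The degree-`e` homogeneous component of `R/I`. -/
def QuotComp (I : Ideal (MvPoly K σ)) (e : ℤ) : Submodule K (MvPoly K σ ⧸ I) :=
  if 0 ≤ e then
    Submodule.map (Ideal.Quotient.mkₐ K I).toLinearMap (homogeneousSubmodule σ K e.toNat)
  else ⊥

/-- A graded free resolution of `R/I` by finitely generated graded free modules
`F i = ⊕_{j < rk i} R(-dg i j)`, with degree preserving (degree zero) maps. -/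
structure GradedFreeRes (I : Ideal (MvPoly K σ)) where
  rk : ℕ → ℕ
  dg : (i : ℕ) → Fin (rk i) → ℤ
  dmap : (i : ℕ) → ((Fin (rk (i + 1)) → MvPoly K σ) →ₗ[MvPoly K σ] (Fin (rk i) → MvPoly K σ))
  aug : (Fin (rk 0) → MvPoly K σ) →ₗ[MvPoly K σ] (MvPoly K σ ⧸ I)
  aug_surj : Function.Surjective aug
  exact0 : Function.Exact (dmap 0) aug
  exactS : ∀ i, Function.Exact (dmap (i + 1)) (dmap i)
  graded : ∀ i (e : ℤ) v, IsHomogVec K σ (dg (i + 1)) e v → IsHomogVec K σ (dg i) e (dmap i v)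
  aug_graded : ∀ (e : ℤ) v, IsHomogVec K σ (dg 0) e v → aug v ∈ QuotComp K σ I e

/-- `R/I` admits a graded free resolution all of whose twists `dg i j` satisfy
`dg i j - i ≤ r`. -/
def ResBound (I : Ideal (MvPoly K σ)) (r : ℤ) : Prop :=
  ∃ F : GradedFreeRes K σ I, ∀ i j, F.dg i j - i ≤ r

open Classical in
/-- The Castelnuovo–Mumford regularity of `R/I`: the least `r` bounding the twists of
a graded free resolution of `R/I` (with the convention `⊥ = -∞` for the zero module). -/
def CMreg (I : Ideal (MvPoly K σ)) : WithBot ℤ :=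
  if h : ∃ r : ℤ, ResBound K σ I r ∧ ∀ s : ℤ, ResBound K σ I s → r ≤ s
  then ((h.choose : ℤ) : WithBot ℤ) else ⊥

variable {n : ℕ}

/-- The monomial `x^a`. -/
def mono (K : Type) [Field K] {n : ℕ} (a : Fin n →₀ ℕ) : MvPoly K (Fin n) :=
  MvPolynomial.monomial a 1

/-- A monomial ideal: an ideal generated by monomials. -/
def IsMonomialIdeal (I : Ideal (MvPoly K (Fin n))) : Prop :=
  ∃ S : Set (Fin n →₀ ℕ), I = Ideal.span (mono K '' S)

/-- A squarefree exponent vector. -/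
def SqfreeExp (a : Fin n →₀ ℕ) : Prop := ∀ i, a i ≤ 1

/-- A squarefree monomial ideal: an ideal generated by squarefree monomials. -/
def IsSqfreeMonomialIdeal (I : Ideal (MvPoly K (Fin n))) : Prop :=
  ∃ S : Set (Fin n →₀ ℕ), (∀ a ∈ S, SqfreeExp a) ∧ I = Ideal.span (mono K '' S)

end

/-!
Multigraded maps of free modules `⊕ R(-a j)` are scalar matrices, and the component of multidegree
`b` of such a module involves the basis elements with `a j ≤ b` only. Let `ψ` have an upper adjoint
`φ` for the order of exponents. As `ψ (a j) ≤ b` if and only if `a j ≤ φ b`, replacing each `a j` by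
`ψ (a j)` turns a multigraded resolution of the ideal with exponents `S` into one of the ideal with
exponents `ψ '' S`, with the same matrices. So if `ψ` raises degrees by at most `k`, it raises the
regularity by at most `k`. This applies to bounds on `ℤ`-graded resolutions because the first terms
of two resolutions can be exchanged, as in Schanuel's lemma, so that a multigraded resolution with
the same bounds can be built one step at a time.

All the inequalities come from maps `ψ` changing the exponent of `x_i` by a monotone function: one
which lowers the exponent `q` to `q - 1` or `1`, or raises it back, and fixes the exponents of `x_i`
in `A`.
-/

/-! ### Infinite paths with increasing bounds -/

section Path

variable {α β : Type*} {step : ℤ → α → α → Prop} {r : ℤ} {x y : α}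

/-- `x` starts an infinite path whose `i`-th step satisfies `step` with bound `r + i`. Resolutions
are the paths for which a step passes from a module to its syzygies. -/
def HasPath (step : ℤ → α → α → Prop) (r : ℤ) (x : α) : Prop :=
  ∃ f : ℕ → α, f 0 = x ∧ ∀ i : ℕ, step (r + i) (f i) (f (i + 1))

theorem HasPath.of_invariant (P : ℤ → α → Prop)
    (hP : ∀ r x, P r x → ∃ y, step r x y ∧ P (r + 1) y) (hx : P r x) : HasPath step r x := by
  choose! next hstep hnext using hP
  let f : ℕ → α := fun i => i.rec x fun k y => next (r + k) y
  have hf (i : ℕ) : P (r + i) (f i) := by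
    induction i with
    | zero => simpa [f] using hx
    | succ i ih => simpa [add_assoc] using hnext _ _ ih
  exact ⟨f, rfl, fun i => hstep _ _ (hf i)⟩

theorem HasPath.exists_step (h : HasPath step r x) : ∃ y, step r x y ∧ HasPath step (r + 1) y := by
  obtain ⟨f, rfl, hf⟩ := h
  refine ⟨f 1, by simpa using hf 0, fun i => f (i + 1), rfl, fun i => ?_⟩
  simpa [add_assoc, add_comm (1 : ℤ)] using hf (i + 1)

theorem HasPath.cons (hxy : step r x y) (h : HasPath step (r + 1) y) : HasPath step r x := by
  refine .of_invariant (fun r x => ∃ y, step r x y ∧ HasPath step (r + 1) y) ?_ ⟨y, hxy, h⟩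
  rintro r x ⟨y, hxy, h⟩
  exact ⟨y, hxy, h.exists_step⟩

theorem HasPath.map {step' : ℤ → β → β → Prop} {F : α → β} {k : ℤ}
    (hF : ∀ r x y, step r x y → step' (r + k) (F x) (F y)) (h : HasPath step r x) :
    HasPath step' (r + k) (F x) := by
  obtain ⟨f, rfl, hf⟩ := h
  exact ⟨F ∘ f, rfl, fun i => add_right_comm r k i ▸ hF _ _ _ (hf i)⟩

end Path

/-! ### Comparison of two covers of a module -/

section Comparison

variable {S F₂ F₁ F₀ G M : Type*} [Ring S] [AddCommGroup F₂] [AddCommGroup F₁] [AddCommGroup F₀]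
  [AddCommGroup G] [AddCommGroup M] [Module S F₂] [Module S F₁] [Module S F₀] [Module S G]
  [Module S M] {D₂ : F₂ →ₗ[S] F₁} {D₁ : F₁ →ₗ[S] F₀} {D₀ : F₀ →ₗ[S] M} {C : G →ₗ[S] M}
  {f : F₀ →ₗ[S] G} {g : G →ₗ[S] F₀} {h : F₀ →ₗ[S] F₁}

/-- The first map `F₁ ⊕ G → G` of the resolution `⋯ → F₃ → F₂ ⊕ F₀ → F₁ ⊕ G → ker C` which
a resolution `⋯ → F₁ → F₀ → M` induces for another cover `C : G → M`, given lifts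
`f : F₀ → G` and `g : G → F₀` of the identity of `M`. -/
def comparisonMap₀ (D₁ : F₁ →ₗ[S] F₀) (f : F₀ →ₗ[S] G) (g : G →ₗ[S] F₀) : F₁ × G →ₗ[S] G :=
  (f ∘ₗ D₁).coprod (LinearMap.id - f ∘ₗ g)

/-- The second map `F₂ ⊕ F₀ → F₁ ⊕ G` of the same resolution; here `h` is a homotopy,
`D₁ ∘ h = g ∘ f - 1`. -/
def comparisonMap₁ (D₂ : F₂ →ₗ[S] F₁) (f : F₀ →ₗ[S] G) (h : F₀ →ₗ[S] F₁) :
    F₂ × F₀ →ₗ[S] F₁ × G :=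
  (D₂.coprod h).prod (f ∘ₗ LinearMap.snd S F₂ F₀)

theorem range_comparisonMap₀ (h₁ : LinearMap.range D₁ = LinearMap.ker D₀)
    (hf : ∀ v, C (f v) = D₀ v) (hg : ∀ z, D₀ (g z) = C z) :
    LinearMap.range (comparisonMap₀ D₁ f g) = LinearMap.ker C := by
  have hD (y : F₁) : D₀ (D₁ y) = 0 := (h₁ ▸ LinearMap.mem_range_self D₁ y :)
  apply le_antisymm
  · rintro _ ⟨⟨y, z⟩, rfl⟩
    simp [comparisonMap₀, hf, hg, hD]
  · intro z hz
    obtain ⟨y, hy⟩ : g z ∈ LinearMap.range D₁ := by rw [h₁, LinearMap.mem_ker, hg, hz]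
    exact ⟨(y, z), by simp [comparisonMap₀, hy]⟩

theorem range_comparisonMap₁ (h₂ : LinearMap.range D₂ = LinearMap.ker D₁)
    (hh : ∀ v, D₁ (h v) = g (f v) - v) :
    LinearMap.range (comparisonMap₁ D₂ f h) = LinearMap.ker (comparisonMap₀ D₁ f g) := by
  have hD (y : F₂) : D₁ (D₂ y) = 0 := (h₂ ▸ LinearMap.mem_range_self D₂ y :)
  apply le_antisymm
  · rintro _ ⟨⟨y, w⟩, rfl⟩
    simp [comparisonMap₀, comparisonMap₁, hD, hh]
  · rintro ⟨y, u⟩ hyu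
    have hfu : f (g u - D₁ y) = u := by
      rw [LinearMap.mem_ker, comparisonMap₀, LinearMap.coprod_apply] at hyu
      rw [map_sub, ← sub_eq_zero, ← neg_eq_zero, ← hyu]
      simp only [LinearMap.sub_apply, LinearMap.comp_apply, LinearMap.id_apply]
      abel
    obtain ⟨x, hx⟩ : y - h (g u - D₁ y) ∈ LinearMap.range D₂ := by
      rw [h₂, LinearMap.mem_ker, map_sub, hh, hfu]
      abel
    exact ⟨(x, g u - D₁ y), by simp [comparisonMap₁, hx, hfu]⟩

theorem ker_comparisonMap₁ (h₂ : LinearMap.range D₂ = LinearMap.ker D₁)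
    (hh : ∀ v, D₁ (h v) = g (f v) - v) :
    LinearMap.ker (comparisonMap₁ D₂ f h) =
      (LinearMap.ker D₂).map (LinearMap.inl S F₂ F₀) := by
  have hD (y : F₂) : D₁ (D₂ y) = 0 := (h₂ ▸ LinearMap.mem_range_self D₂ y :)
  ext ⟨y, w⟩
  constructor
  · intro hyw
    obtain ⟨hy, hw⟩ : D₂ y + h w = 0 ∧ f w = 0 := by
      simpa [comparisonMap₁, Prod.ext_iff] using hyw
    obtain rfl : w = 0 := by simpa [hD, hh, hw] using congrArg D₁ hy
    exact ⟨y, by simpa using hy, rfl⟩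
  · rintro ⟨y', hy', hyw⟩
    obtain ⟨rfl, rfl⟩ : y' = y ∧ 0 = w := by simpa using hyw
    simpa [comparisonMap₁] using hy'

end Comparison

/-! ### Graded free modules and bounded resolutions -/

noncomputable section Graded

variable {K : Type} [Field K] {σ : Type}

local notation "R" => MvPoly K σ

theorem weight_one_eq_degree (c : σ →₀ ℕ) : Finsupp.weight (1 : σ → ℤ) c = c.degree := by
  simp [Finsupp.weight_apply, Finsupp.sum, Finsupp.degree_apply]

theorem homogComp_iff {e : ℤ} {p : R} :
    HomogComp K σ e p ↔ IsWeightedHomogeneous (1 : σ → ℤ) p e := by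
  unfold HomogComp
  split_ifs with he
  · rw [mem_homogeneousSubmodule]
    refine forall₂_congr fun c _ => ?_
    rw [weight_one_eq_degree, Finsupp.degree_eq_weight_one, ← Int.natCast_inj,
      Int.toNat_of_nonneg he]
    rfl
  · refine ⟨by rintro rfl; exact isWeightedHomogeneous_zero _ _ _, fun hp => ?_⟩
    ext c
    refine hp.coeff_eq_zero c fun hc => he ?_
    rw [← hc, weight_one_eq_degree]
    positivity

theorem mem_quotComp_iff {J : Ideal R} {e : ℤ} {x : R ⧸ J} :
    x ∈ QuotComp K σ J e ↔
      ∃ p, IsWeightedHomogeneous (1 : σ → ℤ) p e ∧ Ideal.Quotient.mk J p = x := by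
  simp only [← homogComp_iff]
  unfold QuotComp HomogComp
  split_ifs
  · exact Submodule.mem_map
  · simp [eq_comm]

variable {ι κ : Type} {d : ι → ℤ} {d' : κ → ℤ} {e : ℤ} {v : ι → MvPoly K σ}

/-- The component of degree `e` of the graded free module `⊕_{j : ι} R(-d j)`; it consists of the
vectors satisfying `IsHomogVec`, over an arbitrary index type. -/
def gradedPiece (K : Type) [Field K] (σ : Type) {ι : Type} (d : ι → ℤ) (e : ℤ) :
    Submodule K (ι → MvPoly K σ) :=
  Submodule.pi Set.univ fun j => weightedHomogeneousSubmodule K (1 : σ → ℤ) (e - d j)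

theorem mem_gradedPiece :
    v ∈ gradedPiece K σ d e ↔ ∀ j, IsWeightedHomogeneous (1 : σ → ℤ) (v j) (e - d j) := by
  simp [gradedPiece, Submodule.mem_pi]

theorem isHomogVec_iff {m : ℕ} {d : Fin m → ℤ} {v : Fin m → R} :
    IsHomogVec K σ d e v ↔ v ∈ gradedPiece K σ d e := by
  simp only [IsHomogVec, homogComp_iff, mem_gradedPiece]

theorem single_monomial_mem_gradedPiece [DecidableEq ι] (j : ι) (c : σ →₀ ℕ) (t : K) :
    Pi.single j (monomial c t) ∈ gradedPiece K σ d (c.degree + d j) := by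
  rw [mem_gradedPiece]
  intro k
  obtain rfl | h := eq_or_ne k j
  · rw [Pi.single_eq_same, add_sub_cancel_right]
    exact isWeightedHomogeneous_monomial _ _ _ (weight_one_eq_degree c)
  · rw [Pi.single_eq_of_ne h]
    exact isWeightedHomogeneous_zero _ _ _

theorem single_one_mem_gradedPiece [DecidableEq ι] (j : ι) :
    Pi.single j 1 ∈ gradedPiece K σ d (d j) := by
  simpa using single_monomial_mem_gradedPiece (K := K) (σ := σ) (d := d) j 0 1

theorem vec_induction [Finite ι] [DecidableEq ι] {P : (ι → R) → Prop} (zero : P 0)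
    (add : ∀ v w, P v → P w → P (v + w)) (single : ∀ j c t, P (Pi.single j (monomial c t)))
    (v : ι → R) : P v := by
  have := Fintype.ofFinite ι
  rw [← Finset.univ_sum_single v]
  refine Finset.sum_induction _ P add zero fun j _ => ?_
  induction v j using MvPolynomial.induction_on' with
  | monomial c t => exact single j c t
  | add p q hp hq => exact Pi.single_add (f := fun _ => R) j p q ▸ add _ _ hp hq

/-- The projection of `⊕_{j : ι} R(-d j)` onto its component of degree `e`. -/
def gradedProj (K : Type) [Field K] (σ : Type) {ι : Type} (d : ι → ℤ) (e : ℤ) :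
    (ι → MvPoly K σ) →ₗ[K] (ι → MvPoly K σ) :=
  LinearMap.pi fun j => weightedHomogeneousComponent 1 (e - d j) ∘ₗ LinearMap.proj j

theorem gradedProj_apply (v : ι → R) (j : ι) :
    gradedProj K σ d e v j = weightedHomogeneousComponent (1 : σ → ℤ) (e - d j) (v j) := rfl

theorem gradedProj_mem (v : ι → R) : gradedProj K σ d e v ∈ gradedPiece K σ d e :=
  mem_gradedPiece.mpr fun _ => weightedHomogeneousComponent_mem _ _ _

theorem gradedProj_of_mem (hv : v ∈ gradedPiece K σ d e) : gradedProj K σ d e v = v :=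
  funext fun j => (mem_gradedPiece.mp hv j).weightedHomogeneousComponent_same

theorem gradedProj_of_mem_of_ne {e' : ℤ} (hv : v ∈ gradedPiece K σ d e') (he : e' ≠ e) :
    gradedProj K σ d e v = 0 :=
  funext fun j => (mem_gradedPiece.mp hv j).weightedHomogeneousComponent_ne _ (by omega)

/-- A map of graded free modules which preserves degrees. -/
def IsGradedMap (d : ι → ℤ) (d' : κ → ℤ) (D : (ι → R) →ₗ[R] (κ → R)) : Prop :=
  ∀ e, ∀ v ∈ gradedPiece K σ d e, D v ∈ gradedPiece K σ d' e

variable {D : (ι → MvPoly K σ) →ₗ[MvPoly K σ] (κ → MvPoly K σ)}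

theorem IsGradedMap.map_gradedProj [Finite ι] (hD : IsGradedMap d d' D) (e : ℤ) (v : ι → R) :
    D (gradedProj K σ d e v) = gradedProj K σ d' e (D v) := by
  classical
  induction v using vec_induction with
  | zero => simp
  | add v w hv hw => simp only [map_add, hv, hw]
  | single j c t =>
    have hmem := single_monomial_mem_gradedPiece (K := K) (d := d) j c t
    obtain rfl | he := eq_or_ne (c.degree + d j) e
    · rw [gradedProj_of_mem hmem, gradedProj_of_mem (hD _ _ hmem)]
    · rw [gradedProj_of_mem_of_ne hmem he, gradedProj_of_mem_of_ne (hD _ _ hmem) he, map_zero]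

theorem IsGradedMap.exists_homogeneous_lift_mod [Finite ι] (hD : IsGradedMap d d' D)
    {N : Submodule R (κ → R)} (hN : ∀ w ∈ N, gradedProj K σ d' e w ∈ N) {w : κ → R}
    (hw : w ∈ gradedPiece K σ d' e) (hlift : ∃ v, D v - w ∈ N) :
    ∃ v ∈ gradedPiece K σ d e, D v - w ∈ N := by
  obtain ⟨v, hv⟩ := hlift
  refine ⟨gradedProj K σ d e v, gradedProj_mem v, ?_⟩
  simpa only [map_sub, hD.map_gradedProj, gradedProj_of_mem hw] using hN _ hv

theorem IsGradedMap.exists_homogeneous_lift [Finite ι] (hD : IsGradedMap d d' D) {w : κ → R}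
    (hw : w ∈ gradedPiece K σ d' e) (hlift : w ∈ LinearMap.range D) :
    ∃ v ∈ gradedPiece K σ d e, D v = w := by
  simpa [sub_eq_zero] using hD.exists_homogeneous_lift_mod (N := ⊥) (by simp) hw
    (by simpa [sub_eq_zero] using hlift)

theorem isGradedMap_linearCombination [Fintype ι] {y : ι → κ → R}
    (hy : ∀ j, y j ∈ gradedPiece K σ d' (d j)) :
    IsGradedMap d d' (Fintype.linearCombination R y) := by
  intro e v hv
  rw [Fintype.linearCombination_apply]
  refine sum_mem fun j _ => mem_gradedPiece.mpr fun k => ?_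
  have hmul := (mem_gradedPiece.mp hv j).mul (mem_gradedPiece.mp (hy j) k)
  rwa [sub_add_sub_cancel] at hmul

theorem exists_gradedMap_lift [Finite ι] [DecidableEq ι] {M : Type*} [AddCommGroup M] [Module R M]
    (A : (ι → R) →ₗ[R] M) (C : (κ → R) →ₗ[R] M)
    (h : ∀ j, ∃ y ∈ gradedPiece K σ d' (d j), C y = A (Pi.single j 1)) :
    ∃ f : (ι → R) →ₗ[R] (κ → R), IsGradedMap d d' f ∧ ∀ v, C (f v) = A v := by
  have := Fintype.ofFinite ι
  choose y hy hC using h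
  refine ⟨Fintype.linearCombination R y, isGradedMap_linearCombination hy, ?_⟩
  have hcomp : C ∘ₗ Fintype.linearCombination R y = A := by
    refine (Pi.basisFun R ι).ext fun j => ?_
    rw [Pi.basisFun_apply, LinearMap.comp_apply, Fintype.linearCombination_apply_single, one_smul,
      hC]
  exact LinearMap.congr_fun hcomp

/-- A submodule of a finitely generated graded free module `⊕_{j : ι} R(-deg j)`. -/
structure TwistedSubmodule (K : Type) [Field K] (σ : Type) where
  ι : Type
  [fintype : Fintype ι]
  deg : ι → ℤ
  carrier : Submodule (MvPoly K σ) (ι → MvPoly K σ)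

attribute [instance] TwistedSubmodule.fintype

/-- `N'` is the kernel of a graded free cover of `N` all of whose twists are at most `r`. -/
def IsSyzygy (r : ℤ) (N N' : TwistedSubmodule K σ) : Prop :=
  (∀ j, N'.deg j ≤ r) ∧ ∃ D : (N'.ι → R) →ₗ[R] (N.ι → R), IsGradedMap N'.deg N.deg D ∧
    LinearMap.range D = N.carrier ∧ LinearMap.ker D = N'.carrier

/-- `N` has a graded free resolution `⋯ → F₁ → F₀ → N` in which the twists of `F_i` are at most
`r + i`. -/
def HasResolution (r : ℤ) (N : TwistedSubmodule K σ) : Prop := HasPath IsSyzygy r N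

theorem HasResolution.exists_cover {r : ℤ} {N : TwistedSubmodule K σ} (hN : HasResolution r N) :
    ∃ (ι : Type) (_ : Fintype ι) (d : ι → ℤ) (D : (ι → R) →ₗ[R] (N.ι → R)),
      (∀ j, d j ≤ r) ∧ IsGradedMap d N.deg D ∧ LinearMap.range D = N.carrier ∧
        HasResolution (r + 1) ⟨ι, d, LinearMap.ker D⟩ := by
  obtain ⟨N', ⟨hr, D, hD, hrange, hker⟩, hres⟩ := HasPath.exists_step hN
  exact ⟨N'.ι, N'.fintype, N'.deg, D, hr, hD, hrange, hker ▸ hres⟩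

theorem HasResolution.of_cover [Fintype ι] {r : ℤ} {N : TwistedSubmodule K σ}
    {D : (ι → R) →ₗ[R] (N.ι → R)} (hd : ∀ j, d j ≤ r) (hD : IsGradedMap d N.deg D)
    (hrange : LinearMap.range D = N.carrier)
    (hres : HasResolution (r + 1) ⟨ι, d, LinearMap.ker D⟩) : HasResolution r N :=
  HasPath.cons ⟨hd, D, hD, hrange, rfl⟩ hres

theorem HasResolution.map [Fintype ι] [Fintype κ] {r : ℤ} {N : Submodule R (ι → R)}
    (hN : HasResolution r ⟨ι, d, N⟩) (hD : IsGradedMap d d' D) (hinj : Function.Injective D) :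
    HasResolution r ⟨κ, d', N.map D⟩ := by
  obtain ⟨F, _, dF, E, hdF, hE, hrange, hres⟩ := hN.exists_cover
  refine .of_cover (D := D ∘ₗ E) hdF (fun e v hv => hD _ _ (hE _ _ hv)) ?_ ?_
  · rw [LinearMap.range_comp, hrange]
  · rwa [LinearMap.ker_comp_of_ker_eq_bot _ (LinearMap.ker_eq_bot.mpr hinj)]

/-- The isomorphism `R^(ι ⊕ κ) ≃ R^ι × R^κ`. -/
abbrev sumEquiv (K : Type) [Field K] (σ ι κ : Type) :
    (ι ⊕ κ → MvPoly K σ) ≃ₗ[MvPoly K σ] (ι → MvPoly K σ) × (κ → MvPoly K σ) :=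
  LinearEquiv.sumArrowLequivProdArrow ι κ (MvPoly K σ) (MvPoly K σ)

theorem mem_gradedPiece_sumElim {v : ι ⊕ κ → R} :
    v ∈ gradedPiece K σ (Sum.elim d d') e ↔ (sumEquiv K σ ι κ v).1 ∈ gradedPiece K σ d e ∧
      (sumEquiv K σ ι κ v).2 ∈ gradedPiece K σ d' e := by
  simp only [mem_gradedPiece, Sum.forall]
  rfl

section Lifts

variable {F₁ F₀ G : Type} {M : Type*} [AddCommGroup M] [Module (MvPoly K σ) M]
  {d₁ : F₁ → ℤ} {d₀ : F₀ → ℤ} {dG : G → ℤ}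
  {D₁ : (F₁ → MvPoly K σ) →ₗ[MvPoly K σ] (F₀ → MvPoly K σ)}
  {D₀ : (F₀ → MvPoly K σ) →ₗ[MvPoly K σ] M} {C : (G → MvPoly K σ) →ₗ[MvPoly K σ] M}
  {f : (F₀ → MvPoly K σ) →ₗ[MvPoly K σ] (G → MvPoly K σ)}
  {g : (G → MvPoly K σ) →ₗ[MvPoly K σ] (F₀ → MvPoly K σ)}

theorem exists_graded_homotopy [Finite F₁] [Finite F₀] (hf : IsGradedMap d₀ dG f)
    (hg : IsGradedMap dG d₀ g) (hCf : ∀ v, C (f v) = D₀ v) (hDg : ∀ z, D₀ (g z) = C z)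
    (hD₁ : IsGradedMap d₁ d₀ D₁) (hrange : LinearMap.range D₁ = LinearMap.ker D₀) :
    ∃ h : (F₀ → R) →ₗ[R] (F₁ → R), IsGradedMap d₀ d₁ h ∧ ∀ v, D₁ (h v) = g (f v) - v := by
  classical
  refine exists_gradedMap_lift (g ∘ₗ f - LinearMap.id) D₁ fun j => ?_
  have hj := single_one_mem_gradedPiece (K := K) (σ := σ) (d := d₀) j
  refine hD₁.exists_homogeneous_lift (sub_mem (hg _ _ (hf _ _ hj)) hj) ?_
  simp [hrange, hCf, hDg]

theorem hasResolution_ker_of_lifts [Fintype F₀] [Fintype G] {r : ℤ} (hf : IsGradedMap d₀ dG f)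
    (hg : IsGradedMap dG d₀ g) (hCf : ∀ v, C (f v) = D₀ v) (hDg : ∀ z, D₀ (g z) = C z)
    (hd₀ : ∀ j, d₀ j ≤ r + 2) (hdG : ∀ j, dG j ≤ r + 1)
    (hres : HasResolution (r + 1) ⟨F₀, d₀, LinearMap.ker D₀⟩) :
    HasResolution (r + 1) ⟨G, dG, LinearMap.ker C⟩ := by
  obtain ⟨F₁, _, d₁, D₁, hd₁, hD₁, hrange₁, hres⟩ := hres.exists_cover
  obtain ⟨F₂, _, d₂, D₂, hd₂, hD₂, hrange₂, hres⟩ := hres.exists_cover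
  obtain ⟨h, hh, hDh⟩ := exists_graded_homotopy hf hg hCf hDg hD₁ hrange₁
  let e₁ := sumEquiv K σ F₁ G
  let e₂ := sumEquiv K σ F₂ F₀
  let E₀ := comparisonMap₀ D₁ f g ∘ₗ e₁.toLinearMap
  let E₁ := e₁.symm.toLinearMap ∘ₗ comparisonMap₁ D₂ f h ∘ₗ e₂.toLinearMap
  let inl := e₂.symm.toLinearMap ∘ₗ LinearMap.inl R (F₂ → R) (F₀ → R)
  have hE₀ : IsGradedMap (Sum.elim d₁ dG) dG E₀ := fun e v hv => by
    obtain ⟨hy, hz⟩ := mem_gradedPiece_sumElim.mp hv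
    exact add_mem (hf _ _ (hD₁ _ _ hy)) (sub_mem hz (hf _ _ (hg _ _ hz)))
  have hE₁ : IsGradedMap (Sum.elim d₂ d₀) (Sum.elim d₁ dG) E₁ := fun e v hv => by
    obtain ⟨hy, hw⟩ := mem_gradedPiece_sumElim.mp hv
    exact mem_gradedPiece_sumElim.mpr ⟨add_mem (hD₂ _ _ hy) (hh _ _ hw), hf _ _ hw⟩
  have hinl : IsGradedMap d₂ (Sum.elim d₂ d₀) inl := fun e v hv =>
    mem_gradedPiece_sumElim.mpr ⟨hv, zero_mem _⟩
  have hrangeE₀ : LinearMap.range E₀ = LinearMap.ker C := by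
    rw [LinearMap.range_comp_of_range_eq_top _ (LinearEquiv.range _),
      range_comparisonMap₀ hrange₁ hCf hDg]
  have hrangeE₁ : LinearMap.range E₁ = LinearMap.ker E₀ := by
    rw [LinearMap.range_comp, LinearMap.range_comp_of_range_eq_top _ (LinearEquiv.range _),
      range_comparisonMap₁ hrange₂ hDh, LinearMap.ker_comp]
    exact Submodule.map_equiv_eq_comap_symm e₁.symm _
  have hkerE₁ : LinearMap.ker E₁ = (LinearMap.ker D₂).map inl := by
    rw [LinearMap.ker_comp_of_ker_eq_bot _ (LinearEquiv.ker _), LinearMap.ker_comp,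
      ker_comparisonMap₁ hrange₂ hDh, Submodule.map_comp]
    exact (Submodule.map_equiv_eq_comap_symm e₂.symm _).symm
  refine .of_cover (Sum.forall.mpr ⟨hd₁, hdG⟩) hE₀ hrangeE₀ (.of_cover
    (Sum.forall.mpr ⟨hd₂, fun j => (hd₀ j).trans_eq (by ring)⟩) hE₁ hrangeE₁ ?_)
  rw [hkerE₁]
  exact HasResolution.map hres hinl (e₂.symm.injective.comp LinearMap.inl_injective)

end Lifts

theorem HasResolution.of_isSyzygy {r : ℤ} {N N' : TwistedSubmodule K σ} (hN : HasResolution r N)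
    (hN' : IsSyzygy r N N') : HasResolution (r + 1) N' := by
  classical
  obtain ⟨hdeg, C, hC, hrange, hker⟩ := hN'
  obtain ⟨F₀, _, d₀, D₀, hd₀, hD₀, hrange₀, hres⟩ := hN.exists_cover
  obtain ⟨f, hf, hCf⟩ := exists_gradedMap_lift (d := d₀) D₀ C fun j =>
    hC.exists_homogeneous_lift (hD₀ _ _ (single_one_mem_gradedPiece j))
      (by rw [hrange, ← hrange₀]; exact ⟨_, rfl⟩)
  obtain ⟨g, hg, hDg⟩ := exists_gradedMap_lift (d := N'.deg) C D₀ fun j =>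
    hD₀.exists_homogeneous_lift (hC _ _ (single_one_mem_gradedPiece j))
      (by rw [hrange₀, ← hrange]; exact ⟨_, rfl⟩)
  have hres' := hasResolution_ker_of_lifts hf hg hCf hDg (fun j => (hd₀ j).trans (by omega))
    (fun j => (hdeg j).trans (by omega)) hres
  rwa [hker] at hres'

end Graded

/-! ### Resolutions of an ideal -/

noncomputable section IdealResolution

variable {K : Type} [Field K] {σ : Type}

local notation "R" => MvPoly K σ

/-- The canonical cover `R → R/J`, with `R` written as vectors over `Fin 1`. -/
def quotMap (J : Ideal (MvPoly K σ)) : (Fin 1 → MvPoly K σ) →ₗ[MvPoly K σ] (MvPoly K σ ⧸ J) :=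
  J.mkQ ∘ₗ LinearMap.proj 0

theorem quotMap_apply (J : Ideal R) (v : Fin 1 → R) : quotMap J v = Ideal.Quotient.mk J (v 0) := rfl

/-- The ideal `J` as a submodule of the graded free module `R`. -/
def idealSubmodule (J : Ideal (MvPoly K σ)) : TwistedSubmodule K σ :=
  ⟨Fin 1, fun _ => 0, LinearMap.ker (quotMap J)⟩

/-- The `i`-th syzygy module of a resolution of `R/J`, inside the `i`-th free module. -/
def GradedFreeRes.syzygy {J : Ideal (MvPoly K σ)} (F : GradedFreeRes K σ J) :
    ℕ → TwistedSubmodule K σ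
  | 0 => ⟨Fin (F.rk 0), F.dg 0, LinearMap.ker F.aug⟩
  | i + 1 => ⟨Fin (F.rk (i + 1)), F.dg (i + 1), LinearMap.ker (F.dmap i)⟩

theorem isGradedMap_iff {m k : ℕ} {d : Fin m → ℤ} {d' : Fin k → ℤ}
    {D : (Fin m → R) →ₗ[R] (Fin k → R)} :
    IsGradedMap d d' D ↔ ∀ e v, IsHomogVec K σ d e v → IsHomogVec K σ d' e (D v) := by
  simp only [IsGradedMap, isHomogVec_iff]

theorem GradedFreeRes.hasResolution_ker_aug {J : Ideal R} (F : GradedFreeRes K σ J) {r : ℤ}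
    (hF : ∀ i j, F.dg i j - i ≤ r) :
    HasResolution (r + 1) ⟨Fin (F.rk 0), F.dg 0, LinearMap.ker F.aug⟩ := by
  have hdg (i : ℕ) (j) : F.dg (i + 1) j ≤ r + 1 + i := by
    have := hF (i + 1) j
    push_cast at this
    omega
  refine ⟨F.syzygy, rfl, fun i => ?_⟩
  have hgraded := isGradedMap_iff.mpr (F.graded i)
  cases i with
  | zero => exact ⟨hdg 0, F.dmap 0, hgraded, F.exact0.linearMap_ker_eq.symm, rfl⟩
  | succ i => exact ⟨hdg _, F.dmap (i + 1), hgraded, (F.exactS i).linearMap_ker_eq.symm, rfl⟩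

/-- A negative bound would put all of `F₀`, hence the image `R/J` of the augmentation, in negative
degrees. -/
theorem nonneg_of_resBound {J : Ideal R} {r : ℤ} (hJ : J ≠ ⊤) (hr : ResBound K σ J r) : 0 ≤ r := by
  classical
  obtain ⟨F, hF⟩ := hr
  by_contra! hneg
  have haug : F.aug = 0 := (Pi.basisFun R _).ext fun j => by
    have hj := F.aug_graded _ _ (isHomogVec_iff.mpr (single_one_mem_gradedPiece j))
    have hdg : F.dg 0 j < 0 := by simpa using (hF 0 j).trans_lt hneg
    rw [QuotComp, if_neg (by omega), Submodule.mem_bot] at hj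
    simpa using hj
  obtain ⟨v, hv⟩ := F.aug_surj (Ideal.Quotient.mk J 1)
  rw [haug, LinearMap.zero_apply] at hv
  exact hJ ((Ideal.eq_top_iff_one J).mpr (Ideal.Quotient.eq_zero_iff_mem.mp hv.symm))

theorem hasResolution_idealSubmodule {J : Ideal R} {r : ℤ} (hr : 0 ≤ r)
    (hJ : ∀ p ∈ J, weightedHomogeneousComponent (1 : σ → ℤ) 0 p ∈ J) (hres : ResBound K σ J r) :
    HasResolution (r + 1) (idealSubmodule J) := by
  classical
  obtain ⟨F, hF⟩ := hres
  obtain ⟨f, hf, hfaug⟩ := exists_gradedMap_lift (d := F.dg 0) (d' := fun _ : Fin 1 => (0 : ℤ))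
    F.aug (quotMap J) fun j => by
      obtain ⟨p, hp, hpj⟩ := mem_quotComp_iff.mp
        (F.aug_graded _ _ (isHomogVec_iff.mpr (single_one_mem_gradedPiece j)))
      exact ⟨fun _ => p, mem_gradedPiece.mpr fun _ => by simpa using hp, hpj⟩
  have hker : ∀ w ∈ LinearMap.ker (quotMap J),
      gradedProj K σ (fun _ => 0) 0 w ∈ LinearMap.ker (quotMap J) := by
    simpa only [LinearMap.mem_ker, quotMap_apply, Ideal.Quotient.eq_zero_iff_mem, gradedProj_apply,
      sub_zero] using fun w : Fin 1 → R => hJ (w 0)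
  have hlift_one : ∃ v ∈ gradedPiece K σ (F.dg 0) 0, F.aug v = Ideal.Quotient.mk J 1 := by
    obtain ⟨v, hv⟩ := F.aug_surj (Ideal.Quotient.mk J 1)
    have hmem (w) : f w - 1 ∈ LinearMap.ker (quotMap J) ↔ F.aug w = Ideal.Quotient.mk J 1 := by
      rw [LinearMap.mem_ker, map_sub, hfaug, sub_eq_zero]
      rfl
    simpa only [hmem] using hf.exists_homogeneous_lift_mod (e := 0) (w := 1)
      (N := LinearMap.ker (quotMap J)) hker
      (mem_gradedPiece.mpr fun _ => by simpa using isWeightedHomogeneous_one K _)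
      ⟨v, (hmem v).mpr hv⟩
  obtain ⟨g, hg, hgaug⟩ := exists_gradedMap_lift (d := fun _ : Fin 1 => (0 : ℤ)) (d' := F.dg 0)
    (quotMap J) F.aug fun j => by
      rwa [quotMap_apply, Subsingleton.elim j 0, Pi.single_eq_same]
  refine hasResolution_ker_of_lifts hf hg hfaug hgaug (fun j => ?_) (fun _ => by omega)
    (F.hasResolution_ker_aug hF)
  have := hF 0 j
  push_cast at this
  omega

theorem resBound_of_hasResolution {J : Ideal R} {r : ℤ} {N : TwistedSubmodule K σ}
    {aug : (N.ι → R) →ₗ[R] (R ⧸ J)} (hsurj : Function.Surjective aug)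
    (haug : ∀ e, ∀ v ∈ gradedPiece K σ N.deg e, aug v ∈ QuotComp K σ J e)
    (hker : LinearMap.ker aug = N.carrier) (hdeg : ∀ j, N.deg j ≤ r)
    (hN : HasResolution (r + 1) N) : ResBound K σ J r := by
  obtain ⟨f, rfl, hf⟩ := hN
  choose hd D hD hrange hkerD using hf
  let ε (i : ℕ) := Fintype.equivFin (f i).ι
  let E (i : ℕ) := LinearEquiv.funCongrLeft R R (ε i)
  have hE (i : ℕ) {e : ℤ} {v} : IsHomogVec K σ ((f i).deg ∘ (ε i).symm) e v ↔
      E i v ∈ gradedPiece K σ (f i).deg e := by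
    rw [isHomogVec_iff, mem_gradedPiece, mem_gradedPiece, (ε i).symm.forall_congr_left]
    simp [E]
  refine ⟨{
    rk := fun i => Fintype.card (f i).ι
    dg := fun i => (f i).deg ∘ (ε i).symm
    dmap := fun i => (E i).symm.toLinearMap ∘ₗ D i ∘ₗ (E (i + 1)).toLinearMap
    aug := aug ∘ₗ (E 0).toLinearMap
    aug_surj := hsurj.comp (E 0).surjective
    exact0 := ?_
    exactS := fun i => ?_
    graded := fun i e v hv => (hE i).mpr ?_
    aug_graded := fun e v hv => haug e _ ((hE 0).mp hv) }, fun i j => ?_⟩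
  · have hexact : Function.Exact (D 0) aug := LinearMap.exact_iff.mpr (hker.trans (hrange 0).symm)
    exact .of_ladder_linearEquiv_of_exact (e₁ := (E 1).symm) (e₂ := (E 0).symm)
      (e₃ := .refl _ _) (by ext; simp) (by ext; simp) hexact
  · have hexact : Function.Exact (D (i + 1)) (D i) :=
      LinearMap.exact_iff.mpr ((hkerD i).trans (hrange (i + 1)).symm)
    exact .of_ladder_linearEquiv_of_exact (e₁ := (E (i + 2)).symm) (e₂ := (E (i + 1)).symm)
      (e₃ := (E i).symm) (by ext; simp) (by ext; simp) hexact
  · simpa using hD i e _ ((hE (i + 1)).mp hv)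
  · cases i with
    | zero => simpa using hdeg _
    | succ i =>
      have := hd i ((ε (i + 1)).symm j)
      simp only [Function.comp_apply]
      push_cast
      omega

/-- The ideal generated by the monomials with exponents in `S`. -/
def monomialIdeal (K : Type) [Field K] {σ : Type} (S : Set (σ →₀ ℕ)) : Ideal (MvPoly K σ) :=
  Ideal.span ((fun a => monomial a 1) '' S)

theorem mem_monomialIdeal {S : Set (σ →₀ ℕ)} {p : R} :
    p ∈ monomialIdeal K S ↔ ∀ c, coeff c p ≠ 0 → c ∈ upperClosure S := by
  simp only [monomialIdeal, mem_ideal_span_monomial_image, mem_support_iff, mem_upperClosure]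

theorem monomialIdeal_eq_top_iff {S : Set (σ →₀ ℕ)} : monomialIdeal K S = ⊤ ↔ 0 ∈ S := by
  classical
  simp [Ideal.eq_top_iff_one, mem_monomialIdeal, coeff_one]

theorem resBound_monomialIdeal_iff {S : Set (σ →₀ ℕ)} (hS : 0 ∉ S) {r : ℤ} :
    ResBound K σ (monomialIdeal K S) r ↔
      0 ≤ r ∧ HasResolution (r + 1) (idealSubmodule (monomialIdeal K S)) := by
  classical
  refine ⟨fun h => ?_, fun ⟨hr, h⟩ => ?_⟩
  · have hr := nonneg_of_resBound (mt monomialIdeal_eq_top_iff.mp hS) h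
    refine ⟨hr, hasResolution_idealSubmodule hr (fun p hp => ?_) h⟩
    simp only [mem_monomialIdeal, coeff_weightedHomogeneousComponent] at hp ⊢
    exact fun c hc => hp c fun h => hc (by simp [h])
  · refine resBound_of_hasResolution (aug := quotMap _) ?_ (fun e v hv => ?_) rfl (fun _ => hr) h
    · exact (Submodule.mkQ_surjective _).comp fun p => ⟨fun _ => p, rfl⟩
    · refine mem_quotComp_iff.mpr ⟨v (0 : Fin 1), ?_, rfl⟩
      simpa [idealSubmodule] using mem_gradedPiece.mp hv (0 : Fin 1)

end IdealResolution

/-! ### Multigraded free modules -/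

noncomputable section Multigraded

variable {K : Type} [Field K] {σ : Type} {ι κ : Type} {a : ι → σ →₀ ℕ} {a' : κ → σ →₀ ℕ}
  {b b' : σ →₀ ℕ}

local notation "R" => MvPoly K σ

/-- The component of multidegree `b` of the multigraded free module `⊕_{j : ι} R(-a j)`. As it has
the basis `x^(b - a j)`, for `a j ≤ b`, its elements are given by coefficient vectors supported
on these `j`. -/
def strand (K : Type) [Field K] {σ ι : Type} (a : ι → σ →₀ ℕ) :
    (σ →₀ ℕ) →o Submodule K (ι → K) where
  toFun b := Submodule.pi {j | ¬a j ≤ b} fun _ => ⊥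
  monotone' _ _ hb _ hz j hj := hz j fun hab => hj (hab.trans hb)

theorem mem_strand {z : ι → K} : z ∈ strand K a b ↔ ∀ j, z j ≠ 0 → a j ≤ b :=
  forall_congr' fun _ => not_imp_comm

open Classical in
/-- The coefficient vector of the component of multidegree `b` of an element of
`⊕_{j : ι} R(-a j)`. -/
def coeffVec (a : ι → σ →₀ ℕ) (b : σ →₀ ℕ) : (ι → MvPoly K σ) →ₗ[K] (ι → K) :=
  LinearMap.pi fun j => if a j ≤ b then lcoeff K (b - a j) ∘ₗ LinearMap.proj j else 0

/-- The element of `⊕_{j : ι} R(-a j)` of multidegree `b` with a given coefficient vector. This is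
meaningful on `strand K a b` only, because of the truncated subtraction `b - a j`. -/
def homVec (a : ι → σ →₀ ℕ) (b : σ →₀ ℕ) : (ι → K) →ₗ[K] (ι → MvPoly K σ) :=
  LinearMap.pi fun j => monomial (b - a j) ∘ₗ LinearMap.proj j

open Classical in
theorem coeffVec_apply (v : ι → R) (j : ι) :
    coeffVec a b v j = if a j ≤ b then coeff (b - a j) (v j) else 0 := by
  simp only [coeffVec, LinearMap.pi_apply]
  split_ifs <;> rfl

theorem homVec_apply (z : ι → K) (j : ι) : homVec (σ := σ) a b z j = monomial (b - a j) (z j) := rfl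

theorem coeffVec_mem_strand (v : ι → R) : coeffVec a b v ∈ strand K a b := by
  classical
  exact mem_strand.mpr fun j hj => by_contra fun hab => hj (by rw [coeffVec_apply, if_neg hab])

theorem eq_of_forall_coeffVec_eq {v w : ι → R} (h : ∀ b, coeffVec a b v = coeffVec a b w) :
    v = w := by
  classical
  ext j c
  simpa [coeffVec_apply] using congrFun (h (c + a j)) j

theorem coeffVec_homVec {z : ι → K} (hz : z ∈ strand K a b) : coeffVec a b (homVec a b z) = z := by
  classical
  ext j
  rw [coeffVec_apply, homVec_apply, coeff_monomial, if_pos rfl, ite_eq_left_iff]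
  exact fun hj => (not_imp_comm.mp (mem_strand.mp hz j) hj).symm

theorem coeffVec_homVec_of_ne {z : ι → K} (hz : z ∈ strand K a b) (hb : b' ≠ b) :
    coeffVec a b' (homVec a b z) = 0 := by
  classical
  ext j
  rw [coeffVec_apply, homVec_apply, coeff_monomial, Pi.zero_apply, ite_eq_right_iff]
  refine fun hj => ite_eq_right_iff.mpr fun hbb' => by_contra fun hzj => hb ?_
  exact ((tsub_left_inj (mem_strand.mp hz j hzj) hj).mp hbb').symm

open Classical in
theorem coeffVec_monomial_smul (c : σ →₀ ℕ) (t : K) (v : ι → R) :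
    coeffVec a b ((monomial c t : R) • v) = if c ≤ b then t • coeffVec a (b - c) v else 0 := by
  ext j
  have hle (x y : σ →₀ ℕ) : x ≤ b ∧ y ≤ b - x ↔ y + x ≤ b :=
    ⟨fun ⟨hx, hy⟩ => (le_tsub_iff_right hx).mp hy,
      fun h => ⟨le_of_add_le_right h, le_tsub_of_add_le_right h⟩⟩
  simp only [coeffVec_apply, ite_apply, Pi.smul_apply, Pi.zero_apply, smul_eq_mul, mul_ite,
    mul_zero, coeff_monomial_mul', ← ite_and, hle, add_comm c, tsub_right_comm (b := c)]

theorem coeffVec_single_monomial [DecidableEq ι] [DecidableEq (σ →₀ ℕ)] (j : ι) (c : σ →₀ ℕ)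
    (t : K) :
    coeffVec a b (Pi.single j (monomial c t)) = if c + a j = b then Pi.single j t else 0 := by
  classical
  ext k
  obtain rfl | hk := eq_or_ne k j
  · rw [coeffVec_apply, Pi.single_eq_same, coeff_monomial]
    by_cases hk : a k ≤ b
    · simp only [if_pos hk, eq_tsub_iff_add_eq_of_le hk, ite_apply, Pi.single_eq_same,
        Pi.zero_apply]
    · rw [if_neg hk, if_neg fun h : c + a k = b => hk (h ▸ le_add_self), Pi.zero_apply]
  · rw [coeffVec_apply]
    split_ifs <;> simp [hk]

theorem exists_eq_sum_homVec [Finite ι] (a : ι → σ →₀ ℕ) (v : ι → R) :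
    ∃ T : Finset (σ →₀ ℕ), v = ∑ b ∈ T, homVec a b (coeffVec a b v) := by
  classical
  have hfin : {b | coeffVec a b v ≠ 0}.Finite := by
    induction v using vec_induction with
    | zero => simp
    | add v w hv hw =>
      refine (hv.union hw).subset fun b hb => ?_
      contrapose! hb
      simp_all
    | single j c t =>
      refine (Set.finite_singleton (c + a j)).subset fun b hb => ?_
      simp_all [coeffVec_single_monomial]
  refine ⟨hfin.toFinset, eq_of_forall_coeffVec_eq (a := a) fun b => ?_⟩
  rw [map_sum, Finset.sum_eq_single b]
  · rw [coeffVec_homVec (coeffVec_mem_strand v)]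
  · exact fun b' _ hb => coeffVec_homVec_of_ne (coeffVec_mem_strand v) hb.symm
  · intro hb
    rw [coeffVec_homVec (coeffVec_mem_strand v)]
    simpa using hb

theorem cast_degree_tsub {a b : σ →₀ ℕ} (h : a ≤ b) :
    ((b - a).degree : ℤ) = b.degree - a.degree := by
  rw [eq_sub_iff_add_eq, ← Nat.cast_add, ← map_add, tsub_add_cancel_of_le h]

theorem degree_eq_of_coeffVec_ne_zero {e : ℤ} {v : ι → R}
    (hv : v ∈ gradedPiece K σ (fun j => (a j).degree) e) (hb : coeffVec a b v ≠ 0) :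
    b.degree = e := by
  classical
  obtain ⟨j, hj⟩ := Function.ne_iff.mp hb
  have hab := mem_strand.mp (coeffVec_mem_strand v) j hj
  rw [coeffVec_apply, if_pos hab] at hj
  have hdeg := (mem_gradedPiece.mp hv j) hj
  rw [weight_one_eq_degree, cast_degree_tsub hab] at hdeg
  omega

theorem homVec_mem_gradedPiece {z : ι → K} (hz : z ∈ strand K a b) :
    homVec a b z ∈ gradedPiece K σ (fun j => (a j).degree) b.degree := by
  refine mem_gradedPiece.mpr fun j => ?_
  rw [homVec_apply]
  by_cases hj : z j = 0
  · simpa [hj] using isWeightedHomogeneous_zero _ _ _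
  · refine isWeightedHomogeneous_monomial _ _ _ ?_
    rw [weight_one_eq_degree, cast_degree_tsub (mem_strand.mp hz j hj)]

/-- The multigraded submodule of `⊕_{j : ι} R(-a j)` with components `N b`. -/
def ofComponents (a : ι → σ →₀ ℕ) (N : (σ →₀ ℕ) →o Submodule K (ι → K)) :
    Submodule (MvPoly K σ) (ι → MvPoly K σ) where
  carrier := {v | ∀ b, coeffVec a b v ∈ N b}
  zero_mem' b := by simp
  add_mem' hv hw b := by simpa using add_mem (hv b) (hw b)
  smul_mem' p v hv b := by
    classical
    induction p using MvPolynomial.induction_on' with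
    | monomial c t =>
      rw [coeffVec_monomial_smul]
      split_ifs
      · exact Submodule.smul_mem _ t (N.monotone tsub_le_self (hv _))
      · exact zero_mem _
    | add p q hp hq => simpa [add_smul] using add_mem hp hq

variable {N N' : (σ →₀ ℕ) →o Submodule K (ι → K)}

theorem mem_ofComponents {v : ι → R} : v ∈ ofComponents a N ↔ ∀ b, coeffVec a b v ∈ N b := Iff.rfl

theorem homVec_mem_ofComponents (hN : N ≤ strand K a) {z : ι → K} (hz : z ∈ N b) :
    homVec a b z ∈ ofComponents a N := by
  intro b'
  obtain rfl | hb := eq_or_ne b' b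
  · rwa [coeffVec_homVec (hN _ hz)]
  · rw [coeffVec_homVec_of_ne (hN _ hz) hb]
    exact zero_mem _

theorem ofComponents_le [Finite ι] {M : Submodule R (ι → R)}
    (h : ∀ b, ∀ z ∈ N b, homVec a b z ∈ M) : ofComponents a N ≤ M := by
  intro v hv
  obtain ⟨T, hT⟩ := exists_eq_sum_homVec a v
  rw [hT]
  exact sum_mem fun b _ => h b _ (hv b)

theorem le_of_ofComponents_le (hN : N ≤ strand K a) (h : ofComponents a N ≤ ofComponents a N') :
    N ≤ N' := fun b z hz => by
  simpa [coeffVec_homVec (hN b hz)] using h (homVec_mem_ofComponents hN hz) b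

/-- The components of the image of the multigraded map out of `⊕_{x : κ} R(-a' x)` with coefficient
matrix `lam`. -/
def strandImage (a' : κ → σ →₀ ℕ) (lam : (κ → K) →ₗ[K] (ι → K)) :
    (σ →₀ ℕ) →o Submodule K (ι → K) where
  toFun b := (strand K a' b).map lam
  monotone' _ _ hb := Submodule.map_mono ((strand K a').monotone hb)

/-- The components of the kernel of the same map. -/
def strandKer (a' : κ → σ →₀ ℕ) (lam : (κ → K) →ₗ[K] (ι → K)) :
    (σ →₀ ℕ) →o Submodule K (κ → K) where
  toFun b := strand K a' b ⊓ LinearMap.ker lam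
  monotone' _ _ hb := inf_le_inf_right _ ((strand K a').monotone hb)

theorem single_mem_strand [DecidableEq ι] {j : ι} (hj : a j ≤ b) (t : K) :
    Pi.single j t ∈ strand K a b :=
  mem_strand.mpr fun k hk => by
    obtain rfl | hkj := eq_or_ne k j
    · exact hj
    · exact absurd hk (by simp [hkj])

variable {lam : (κ → K) →ₗ[K] (ι → K)}

theorem apply_single_mem_strand [DecidableEq κ] (hlam : strandImage a' lam ≤ strand K a) (x : κ) :
    lam (Pi.single x 1) ∈ strand K a (a' x) :=
  hlam _ (Submodule.mem_map_of_mem (single_mem_strand le_rfl 1))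

variable [Fintype κ] [DecidableEq κ]

/-- The multigraded map `⊕_{x : κ} R(-a' x) → ⊕_{j : ι} R(-a j)` with coefficient matrix `lam`,
provided that `strandImage a' lam ≤ strand K a`. -/
def multigradedMap (a : ι → σ →₀ ℕ) (a' : κ → σ →₀ ℕ) (lam : (κ → K) →ₗ[K] (ι → K)) :
    (κ → MvPoly K σ) →ₗ[MvPoly K σ] (ι → MvPoly K σ) :=
  Fintype.linearCombination (MvPoly K σ) fun x => homVec a (a' x) (lam (Pi.single x 1))

theorem coeffVec_multigradedMap (hlam : strandImage a' lam ≤ strand K a) (v : κ → R) :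
    coeffVec a b (multigradedMap a a' lam v) = lam (coeffVec a' b v) := by
  classical
  induction v using vec_induction with
  | zero => simp
  | add v w hv hw => simp only [map_add, hv, hw]
  | single x c t =>
    have hx := apply_single_mem_strand hlam x
    rw [multigradedMap, Fintype.linearCombination_apply_single, coeffVec_monomial_smul,
      coeffVec_single_monomial]
    obtain rfl | hb := eq_or_ne (c + a' x) b
    · rw [if_pos le_self_add, if_pos rfl, add_tsub_cancel_left, coeffVec_homVec hx, ← map_smul,
        ← Pi.single_smul, smul_eq_mul, mul_one]
    · rw [if_neg hb, map_zero, ite_eq_right_iff]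
      intro hc
      rw [coeffVec_homVec_of_ne hx fun h => hb (by rw [← h, add_tsub_cancel_of_le hc]), smul_zero]

theorem multigradedMap_homVec (hlam : strandImage a' lam ≤ strand K a) {y : κ → K}
    (hy : y ∈ strand K a' b) : multigradedMap a a' lam (homVec a' b y) = homVec a b (lam y) := by
  refine eq_of_forall_coeffVec_eq (a := a) fun b' => ?_
  have hlamy := hlam b (Submodule.mem_map_of_mem hy)
  rw [coeffVec_multigradedMap hlam]
  obtain rfl | hb := eq_or_ne b' b
  · rw [coeffVec_homVec hy, coeffVec_homVec hlamy]
  · rw [coeffVec_homVec_of_ne hy hb, coeffVec_homVec_of_ne hlamy hb, map_zero]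

theorem range_multigradedMap [Finite ι] (hlam : strandImage a' lam ≤ strand K a) :
    LinearMap.range (multigradedMap a a' lam) = ofComponents a (strandImage a' lam) := by
  refine le_antisymm ?_ (ofComponents_le ?_)
  · rintro _ ⟨v, rfl⟩ b
    exact ⟨_, coeffVec_mem_strand v, (coeffVec_multigradedMap hlam v).symm⟩
  · rintro b _ ⟨y, hy, rfl⟩
    exact ⟨_, multigradedMap_homVec hlam hy⟩

theorem ker_multigradedMap (hlam : strandImage a' lam ≤ strand K a) :
    LinearMap.ker (multigradedMap a a' lam) = ofComponents a' (strandKer a' lam) := by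
  ext v
  rw [mem_ofComponents, LinearMap.mem_ker]
  refine ⟨fun hv b => ⟨coeffVec_mem_strand v, ?_⟩, fun hv =>
    eq_of_forall_coeffVec_eq (a := a) fun b => ?_⟩
  · change lam _ = 0
    rw [← coeffVec_multigradedMap hlam, hv, map_zero]
  · rw [coeffVec_multigradedMap hlam, map_zero]
    exact (hv b).2

theorem isGradedMap_multigradedMap (hlam : strandImage a' lam ≤ strand K a) :
    IsGradedMap (fun x => (a' x).degree) (fun j => (a j).degree) (multigradedMap a a' lam) :=
  isGradedMap_linearCombination fun x => homVec_mem_gradedPiece (apply_single_mem_strand hlam x)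

end Multigraded

/-! ### Multigraded resolutions -/

noncomputable section MultigradedResolution

variable {K : Type} [Field K] {σ : Type}

local notation "R" => MvPoly K σ

/-- A multigraded submodule of a finitely generated multigraded free module `⊕_{j : ι} R(-deg j)`,
given by the coefficient vectors of its elements in each multidegree. -/
structure MultigradedSubmodule (K : Type) [Field K] (σ : Type) where
  ι : Type
  [fintype : Fintype ι]
  deg : ι → σ →₀ ℕ
  component : (σ →₀ ℕ) →o Submodule K (ι → K)
  component_le : component ≤ strand K deg

attribute [instance] MultigradedSubmodule.fintype

/-- The underlying `ℤ`-graded submodule. -/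
def MultigradedSubmodule.toTwisted (N : MultigradedSubmodule K σ) : TwistedSubmodule K σ :=
  ⟨N.ι, fun j => (N.deg j).degree, ofComponents N.deg N.component⟩

/-- `N'` is the kernel of a multigraded free cover of `N`, with coefficient matrix `lam`, all of
whose twists have degree at most `r`. -/
def IsMultigradedSyzygy (r : ℤ) (N N' : MultigradedSubmodule K σ) : Prop :=
  (∀ j, (N'.deg j).degree ≤ r) ∧ ∃ lam : (N'.ι → K) →ₗ[K] (N.ι → K),
    strandImage N'.deg lam = N.component ∧ strandKer N'.deg lam = N'.component

/-- The multigraded analogue of `HasResolution`. -/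
def HasMultigradedResolution (r : ℤ) (N : MultigradedSubmodule K σ) : Prop :=
  HasPath IsMultigradedSyzygy r N

variable {r : ℤ} {N N' : MultigradedSubmodule K σ}

theorem IsMultigradedSyzygy.isSyzygy (h : IsMultigradedSyzygy r N N') :
    IsSyzygy r N.toTwisted N'.toTwisted := by
  classical
  obtain ⟨hdeg, lam, hrange, hker⟩ := h
  have hlam : strandImage N'.deg lam ≤ strand K N.deg := hrange.trans_le N.component_le
  exact ⟨hdeg, multigradedMap N.deg N'.deg lam, isGradedMap_multigradedMap hlam,
    (range_multigradedMap hlam).trans (congrArg (ofComponents N.deg) hrange),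
    (ker_multigradedMap hlam).trans (congrArg (ofComponents N'.deg) hker)⟩

theorem HasMultigradedResolution.hasResolution (h : HasMultigradedResolution r N) :
    HasResolution r N.toTwisted := by
  have hmap : HasPath IsSyzygy (r + 0) N.toTwisted :=
    HasPath.map (fun r _ _ h => by simpa using h.isSyzygy) h
  rwa [add_zero] at hmap

/-- An increasing family is generated in `T` if it is the least one with given values on `T`. -/
def GeneratedIn {P L : Type*} [Preorder P] [Preorder L] (T : Set P) (N : P →o L) : Prop :=
  ∀ N' : P →o L, (∀ b ∈ T, N b ≤ N' b) → N ≤ N'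

theorem GeneratedIn.exists_strandImage_eq {ι : Type} [Finite ι] {T : Set (σ →₀ ℕ)} (hT : T.Finite)
    {N : (σ →₀ ℕ) →o Submodule K (ι → K)} (hN : GeneratedIn T N) :
    ∃ (κ : Type) (_ : Fintype κ) (a : κ → σ →₀ ℕ) (lam : (κ → K) →ₗ[K] (ι → K)),
      (∀ x, a x ∈ T) ∧ strandImage a lam = N := by
  classical
  have := hT.fintype
  choose G hG using fun b => IsNoetherian.noetherian (N b)
  refine ⟨Σ b : T, G b, inferInstance, fun x => x.1, Fintype.linearCombination K fun x => x.2.1,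
    fun x => x.1.2, le_antisymm (fun b => ?_) (hN _ fun b hb => ?_)⟩
  · rintro _ ⟨y, hy, rfl⟩
    rw [Fintype.linearCombination_apply]
    refine sum_mem fun x _ => ?_
    by_cases hx : y x = 0
    · simp [hx]
    · have hmem : x.2.1 ∈ N x.1 := hG x.1 ▸ Submodule.subset_span x.2.2
      exact Submodule.smul_mem _ _ (N.monotone (mem_strand.mp hy x hx) hmem)
  · rw [← hG b, Submodule.span_le]
    intro z hz
    let x : Σ b : T, G b := ⟨⟨b, hb⟩, ⟨z, hz⟩⟩
    exact ⟨Pi.single x 1, single_mem_strand (j := x) le_rfl 1, by simp [x]⟩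

theorem GeneratedIn.exists_isMultigradedSyzygy {T : Set (σ →₀ ℕ)} (hN : GeneratedIn T N.component)
    (hT : T.Finite) (hr : ∀ b ∈ T, (b.degree : ℤ) ≤ r) :
    ∃ N', IsMultigradedSyzygy r N N' ∧ ∀ j, N'.deg j ∈ T := by
  obtain ⟨κ, _, a, lam, ha, hlam⟩ := hN.exists_strandImage_eq hT
  exact ⟨⟨κ, a, strandKer a lam, fun _ => inf_le_left⟩, ⟨fun j => hr _ (ha j), lam, hlam, rfl⟩, ha⟩

/-- The syzygies of a module whose components are determined by those in multidegrees at most `c`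
have the same property. -/
theorem hasMultigradedResolution_of_component_le {c : σ →₀ ℕ}
    (hN : ∀ b, N.component b ≤ N.component (b ⊓ c)) (hr : c.degree ≤ r) :
    HasMultigradedResolution r N := by
  refine HasPath.of_invariant (fun r N => (∀ b, N.component b ≤ N.component (b ⊓ c)) ∧
    c.degree ≤ r) ?_ ⟨hN, hr⟩
  rintro r N ⟨hN, hr⟩
  have hgen : GeneratedIn (Set.Iic c) N.component := fun M hM b =>
    (hN b).trans ((hM _ (Set.mem_Iic.mpr inf_le_right)).trans (M.monotone inf_le_left))
  have hfin : (Set.Iic c).Finite := by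
    classical
    exact Set.Icc_bot (a := c) ▸ Set.finite_Icc ⊥ c
  obtain ⟨N', hN', hdeg⟩ := hgen.exists_isMultigradedSyzygy hfin fun b hb =>
    (Nat.cast_le.mpr (Finsupp.degree_mono hb)).trans hr
  refine ⟨N', hN', fun b z hz => ?_, by omega⟩
  obtain ⟨-, lam, -, hker⟩ := hN'
  rw [← hker] at hz ⊢
  exact ⟨mem_strand.mpr fun j hj => le_inf (mem_strand.mp hz.1 j hj) (hdeg j), hz.2⟩

theorem HasResolution.generatedIn (h : HasResolution r N.toTwisted) :
    GeneratedIn {b | (b.degree : ℤ) ≤ r} N.component := by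
  classical
  obtain ⟨ι, _, d, (D : (ι → R) →ₗ[R] (N.ι → R)), hd, hD,
    (hrange : LinearMap.range D = ofComponents N.deg N.component), -⟩ := h.exists_cover
  refine fun M hM => le_of_ofComponents_le N.component_le (hrange.ge.trans ?_)
  rw [LinearMap.range_eq_map, ← (Pi.basisFun R ι).span_eq, Submodule.map_span, Submodule.span_le]
  rintro _ ⟨_, ⟨j, rfl⟩, rfl⟩ b
  rw [Pi.basisFun_apply]
  have hmem : D (Pi.single j 1) ∈ ofComponents N.deg N.component := hrange.le ⟨_, rfl⟩
  by_cases hb : coeffVec N.deg b (D (Pi.single j 1)) = 0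
  · rw [hb]
    exact zero_mem _
  · have hdeg := degree_eq_of_coeffVec_ne_zero (hD _ _ (single_one_mem_gradedPiece j)) hb
    exact hM b (hdeg.trans_le (hd j)) (hmem b)

theorem HasResolution.hasMultigradedResolution [Finite σ] (h : HasResolution r N.toTwisted) :
    HasMultigradedResolution r N := by
  refine HasPath.of_invariant (fun r N => HasResolution r N.toTwisted) (fun r N h => ?_) h
  have hfin : {b : σ →₀ ℕ | (b.degree : ℤ) ≤ r}.Finite :=
    (Finsupp.finite_of_degree_le r.toNat).subset fun b hb =>
      Int.ofNat_le.mp (le_trans hb r.self_le_toNat)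
  obtain ⟨N', hN', -⟩ := h.generatedIn.exists_isMultigradedSyzygy hfin fun _ => id
  exact ⟨N', hN', h.of_isSyzygy hN'.isSyzygy⟩

section Relabel

variable {τ : Type} {ψ : (σ →₀ ℕ) → (τ →₀ ℕ)} {φ : (τ →₀ ℕ) → (σ →₀ ℕ)}

theorem strand_comp {ι : Type} (hψ : GaloisConnection ψ φ) (a : ι → σ →₀ ℕ) (b : τ →₀ ℕ) :
    strand K (ψ ∘ a) b = strand K a (φ b) := by
  ext z
  simp only [mem_strand, Function.comp_apply, hψ _ _]

/-- The module obtained by applying `ψ` to the multidegrees of the basis. -/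
def MultigradedSubmodule.relabel (hψ : GaloisConnection ψ φ) (N : MultigradedSubmodule K σ) :
    MultigradedSubmodule K τ where
  ι := N.ι
  deg := ψ ∘ N.deg
  component := N.component.comp ⟨φ, hψ.monotone_u⟩
  component_le b := (N.component_le (φ b)).trans_eq (strand_comp hψ N.deg b).symm

variable {k : ℕ}

theorem IsMultigradedSyzygy.relabel (hψ : GaloisConnection ψ φ)
    (hk : ∀ a, (ψ a).degree ≤ a.degree + k) (h : IsMultigradedSyzygy r N N') :
    IsMultigradedSyzygy (r + k) (N.relabel hψ) (N'.relabel hψ) := by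
  obtain ⟨hdeg, lam, hrange, hker⟩ := h
  refine ⟨fun j => ?_, lam, ?_, ?_⟩
  · exact (Nat.cast_le.mpr (hk _)).trans (by simpa using hdeg j)
  · ext1; funext b
    exact (congrArg (Submodule.map lam) (strand_comp hψ N'.deg b)).trans
      (DFunLike.congr_fun hrange (φ b))
  · ext1; funext b
    exact (congrArg (· ⊓ LinearMap.ker lam) (strand_comp hψ N'.deg b)).trans
      (DFunLike.congr_fun hker (φ b))

theorem HasMultigradedResolution.relabel (hψ : GaloisConnection ψ φ)
    (hk : ∀ a, (ψ a).degree ≤ a.degree + k) (h : HasMultigradedResolution r N) :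
    HasMultigradedResolution (r + k) (N.relabel hψ) :=
  HasPath.map (fun _ _ _ h => h.relabel hψ hk) h

end Relabel

/-- The components of the submodule of `R` spanned by the monomials with exponents in `U`. -/
def exponentIndicator (K : Type) [Field K] {σ : Type} (U : UpperSet (σ →₀ ℕ)) :
    (σ →₀ ℕ) →o Submodule K (Fin 1 → K) where
  toFun b := Submodule.pi {_j | b ∉ U} fun _ => ⊥
  monotone' _ _ hb _ hz j hj := hz j (mt (U.upper hb) hj)

theorem mem_exponentIndicator {U : UpperSet (σ →₀ ℕ)} {b : σ →₀ ℕ} {z : Fin 1 → K} :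
    z ∈ exponentIndicator K U b ↔ ∀ j, z j ≠ 0 → b ∈ U :=
  forall_congr' fun _ => not_imp_comm

/-- The monomial ideal with exponents in `U`, as a submodule of the multigraded free module `R`: the
component of multidegree `b` is everything if `b ∈ U`, and zero otherwise. -/
def monomialSubmodule (K : Type) [Field K] {σ : Type} (U : UpperSet (σ →₀ ℕ)) :
    MultigradedSubmodule K σ where
  ι := Fin 1
  deg := 0
  component := exponentIndicator K U
  component_le _ _ _ := mem_strand.mpr fun _ _ => zero_le

theorem ofComponents_exponentIndicator (S : Set (σ →₀ ℕ)) :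
    ofComponents 0 (exponentIndicator K (upperClosure S)) =
      LinearMap.ker (quotMap (monomialIdeal K S)) := by
  classical
  ext v
  rw [LinearMap.mem_ker, quotMap_apply, Ideal.Quotient.eq_zero_iff_mem, mem_monomialIdeal]
  refine forall_congr' fun b => ?_
  rw [mem_exponentIndicator]
  simp [coeffVec_apply]

theorem toTwisted_monomialSubmodule (S : Set (σ →₀ ℕ)) :
    (monomialSubmodule K (upperClosure S)).toTwisted = idealSubmodule (monomialIdeal K S) := by
  simp only [MultigradedSubmodule.toTwisted, monomialSubmodule, Pi.zero_apply, map_zero,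
    Nat.cast_zero, idealSubmodule, ← ofComponents_exponentIndicator]
  rfl

theorem relabel_monomialSubmodule {τ : Type} {ψ : (σ →₀ ℕ) → (τ →₀ ℕ)} {φ : (τ →₀ ℕ) → (σ →₀ ℕ)}
    (hψ : GaloisConnection ψ φ) (S : Set (σ →₀ ℕ)) :
    (monomialSubmodule K (upperClosure S)).relabel hψ =
      monomialSubmodule K (upperClosure (ψ '' S)) := by
  have hdeg : ψ ∘ (0 : Fin 1 → σ →₀ ℕ) = 0 := funext fun _ => hψ.l_bot
  have hcomp : (exponentIndicator K (upperClosure S)).comp ⟨φ, hψ.monotone_u⟩ =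
      exponentIndicator K (upperClosure (ψ '' S)) := by
    ext b z
    simp [mem_exponentIndicator, mem_upperClosure, hψ _ _]
  simp only [MultigradedSubmodule.relabel, monomialSubmodule, hdeg]
  congr 1

end MultigradedResolution

/-! ### Comparison of regularities -/

noncomputable section Regularity

variable {K : Type} [Field K] {σ : Type}

local notation "R" => MvPoly K σ

theorem resBound_top (r : ℤ) : ResBound K σ ⊤ r := by
  have : Subsingleton (R ⧸ (⊤ : Ideal R)) := Submodule.Quotient.subsingleton_iff.mpr rfl
  refine resBound_of_hasResolution (N := ⟨Empty, Empty.elim, ⊥⟩) (aug := 0)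
    (Function.surjective_to_subsingleton _) (fun _ _ _ => zero_mem _) (Subsingleton.elim _ _)
    (fun j => j.elim) ⟨fun _ => ⟨Empty, Empty.elim, ⊥⟩, rfl, fun i => ⟨fun j => j.elim, 0, ?_⟩⟩
  exact ⟨fun _ _ _ => zero_mem _, Subsingleton.elim _ _, Subsingleton.elim _ _⟩

theorem resBound_image [Finite σ] {τ : Type} {ψ : (σ →₀ ℕ) → (τ →₀ ℕ)} {φ : (τ →₀ ℕ) → (σ →₀ ℕ)}
    (hψ : GaloisConnection ψ φ) {k : ℕ} (hk : ∀ a, (ψ a).degree ≤ a.degree + k)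
    {S : Set (σ →₀ ℕ)} {r : ℤ} (h : ResBound K σ (monomialIdeal K S) r) :
    ResBound K τ (monomialIdeal K (ψ '' S)) (r + k) := by
  by_cases h0 : 0 ∈ ψ '' S
  · rw [monomialIdeal_eq_top_iff.mpr h0]
    exact resBound_top _
  · have h0' : 0 ∉ S := fun hS => h0 ⟨0, hS, hψ.l_bot⟩
    obtain ⟨hr, hres⟩ := (resBound_monomialIdeal_iff h0').mp h
    refine (resBound_monomialIdeal_iff h0).mpr ⟨by positivity, ?_⟩
    rw [← toTwisted_monomialSubmodule] at hres
    rw [← toTwisted_monomialSubmodule, ← relabel_monomialSubmodule hψ, add_right_comm]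
    exact (hres.hasMultigradedResolution.relabel hψ hk).hasResolution

theorem exists_resBound (S : Finset (σ →₀ ℕ)) : ∃ r, ResBound K σ (monomialIdeal K ↑S) r := by
  by_cases h0 : 0 ∈ S
  · rw [monomialIdeal_eq_top_iff.mpr (Finset.mem_coe.mpr h0)]
    exact ⟨0, resBound_top 0⟩
  · refine ⟨(S.sup id).degree, (resBound_monomialIdeal_iff h0).mpr ⟨by positivity, ?_⟩⟩
    rw [← toTwisted_monomialSubmodule]
    refine (hasMultigradedResolution_of_component_le (c := S.sup id) (fun b z hz => ?_)
      (by omega)).hasResolution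
    refine mem_exponentIndicator (K := K).mpr fun j hj => ?_
    obtain ⟨a, ha, hab⟩ := mem_upperClosure.mp (mem_exponentIndicator (K := K).mp hz j hj)
    exact mem_upperClosure.mpr ⟨a, ha, le_inf hab (Finset.le_sup (f := id) ha)⟩

/-- If the bounds for `J` have no least element, they are unbounded below, and so are those for `I`;
then both regularities are `⊥`. -/
theorem cmreg_le_add {τ : Type} {I : Ideal R} {J : Ideal (MvPoly K τ)} {k : ℕ}
    (hI : ∃ r, ResBound K σ I r) (h : ∀ r, ResBound K σ I r → ResBound K τ J (r + k)) :
    CMreg K τ J ≤ CMreg K σ I + (k : ℤ) := by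
  unfold CMreg
  split_ifs with hJ hleast
  · exact_mod_cast hJ.choose_spec.2 _ (h _ hleast.choose_spec.1)
  · obtain ⟨r, -, hr⟩ := hJ
    refine absurd (Int.exists_least_of_bdd ⟨r - k, fun s hs => ?_⟩ hI) hleast
    exact sub_le_iff_le_add.mpr (hr _ (h s hs))
  all_goals exact bot_le

theorem cmreg_image_le [Finite σ] {τ : Type} {ψ : (σ →₀ ℕ) → (τ →₀ ℕ)} {φ : (τ →₀ ℕ) → (σ →₀ ℕ)}
    (hψ : GaloisConnection ψ φ) {k : ℕ} (hk : ∀ a, (ψ a).degree ≤ a.degree + k)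
    (S : Finset (σ →₀ ℕ)) :
    CMreg K τ (monomialIdeal K (ψ '' ↑S)) ≤ CMreg K σ (monomialIdeal K ↑S) + (k : ℤ) :=
  cmreg_le_add (exists_resBound S) fun _ => resBound_image hψ hk

/-- Apply `g` to the exponent of the `i`-th variable. -/
def mapExponent (i : σ) (g : ℕ → ℕ) (a : σ →₀ ℕ) : σ →₀ ℕ := a.update i (g (a i))

variable {i : σ} {g f : ℕ → ℕ} {k c : ℕ} {a : σ →₀ ℕ}

theorem mapExponent_eq_self (h : g (a i) = a i) : mapExponent i g a = a := by
  rw [mapExponent, h, Finsupp.update_self]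

theorem mapExponent_eq_tsub_single (h : g (a i) = a i - c) :
    mapExponent i g a = a - Finsupp.single i c := by
  classical
  ext j
  obtain rfl | hj := eq_or_ne j i
  · simp [mapExponent, h]
  · simp [mapExponent, hj]

theorem mapExponent_tsub_single (h : g (a i - c) = a i) :
    mapExponent i g (a - Finsupp.single i c) = a := by
  classical
  ext j
  obtain rfl | hj := eq_or_ne j i
  · simp [mapExponent, h]
  · simp [mapExponent, hj]

theorem galoisConnection_mapExponent (i : σ) (h : GaloisConnection g f) :
    GaloisConnection (mapExponent i g) (mapExponent i f) := by
  classical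
  intro a b
  simp only [mapExponent, ← Finsupp.coe_le_coe, Finsupp.coe_update, update_le_iff, le_update_iff,
    h (a i) (b i)]

theorem degree_mapExponent_le (h : ∀ s, g s ≤ s + k) (i : σ) (a : σ →₀ ℕ) :
    (mapExponent i g a).degree ≤ a.degree + k := by
  have ha := congrArg Finsupp.degree (a.erase_add_single i)
  rw [map_add, Finsupp.degree_single] at ha
  rw [mapExponent, Finsupp.update_eq_erase_add_single, map_add, Finsupp.degree_single]
  linarith [h (a i)]

theorem mapExponent_image_eq {A : Set (σ →₀ ℕ)} (h : ∀ a ∈ A, g (a i) = a i) :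
    mapExponent i g '' A = A :=
  (Set.image_congr fun a ha => mapExponent_eq_self (h a ha)).trans (Set.image_id' A)

variable [Finite σ] [DecidableEq σ] {A B : Finset (σ →₀ ℕ)} {q : ℕ}

theorem cmreg_tsub_single_le (h : GaloisConnection g f) (hk : ∀ s, g s ≤ s + k)
    (hB : ∀ b ∈ B, b i = q) (hq : g q = q - c) (hA : ∀ a ∈ A, g (a i) = a i) :
    CMreg K σ (monomialIdeal K ↑((B.image fun b => b - Finsupp.single i c) ∪ A)) ≤
      CMreg K σ (monomialIdeal K ↑(B ∪ A)) + (k : ℤ) := by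
  have himage : ↑((B.image fun b => b - Finsupp.single i c) ∪ A) = mapExponent i g '' ↑(B ∪ A) := by
    push_cast
    rw [Set.image_union, mapExponent_image_eq hA]
    congr 1
    exact Set.image_congr fun b hb => (mapExponent_eq_tsub_single (by rw [hB b hb, hq])).symm
  rw [himage]
  exact cmreg_image_le (galoisConnection_mapExponent i h) (degree_mapExponent_le hk i) _

theorem cmreg_le_tsub_single (h : GaloisConnection g f) (hk : ∀ s, g s ≤ s + k)
    (hB : ∀ b ∈ B, b i = q) (hq : g (q - c) = q) (hA : ∀ a ∈ A, g (a i) = a i) :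
    CMreg K σ (monomialIdeal K ↑(B ∪ A)) ≤
      CMreg K σ (monomialIdeal K ↑((B.image fun b => b - Finsupp.single i c) ∪ A)) + (k : ℤ) := by
  have himage : ↑(B ∪ A) = mapExponent i g '' ↑((B.image fun b => b - Finsupp.single i c) ∪ A) := by
    push_cast
    rw [Set.image_union, Set.image_image, mapExponent_image_eq hA]
    congr 1
    refine ((Set.image_congr fun b hb => mapExponent_tsub_single ?_).trans (Set.image_id' _)).symm
    rw [hB b hb, hq]
  rw [himage]
  exact cmreg_image_le (galoisConnection_mapExponent i h) (degree_mapExponent_le hk i) _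

theorem cmreg_tsub_single_one_le (hq : 1 ≤ q) (hB : ∀ b ∈ B, b i = q) (hA : ∀ a ∈ A, a i < q) :
    CMreg K σ (monomialIdeal K ↑((B.image fun b => b - Finsupp.single i 1) ∪ A)) ≤
      CMreg K σ (monomialIdeal K ↑(B ∪ A)) := by
  let g (s : ℕ) := if s < q then s else s - 1
  let f (t : ℕ) := if t + 1 < q then t else t + 1
  have hgf : GaloisConnection g f := fun s t => by
    dsimp only [g, f]
    split_ifs <;> omega
  have hg (s : ℕ) : g s ≤ s + 0 := by grind
  exact le_of_le_of_eq (cmreg_tsub_single_le hgf hg hB (by simp [g]) fun a ha => if_pos (hA a ha))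
    (by simp)

theorem cmreg_le_tsub_single_one_add_one (hq : 2 ≤ q) (hB : ∀ b ∈ B, b i = q)
    (hA : ∀ a ∈ A, a i + 2 ≤ q) :
    CMreg K σ (monomialIdeal K ↑(B ∪ A)) ≤
      CMreg K σ (monomialIdeal K ↑((B.image fun b => b - Finsupp.single i 1) ∪ A)) + 1 := by
  let g (s : ℕ) := if s + 2 ≤ q then s else s + 1
  let f (t : ℕ) := if t + 2 ≤ q then t else t - 1
  have hgf : GaloisConnection g f := fun s t => by
    dsimp only [g, f]
    split_ifs <;> omega
  have hg (s : ℕ) : g s ≤ s + 1 := by grind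
  exact cmreg_le_tsub_single hgf hg hB (by grind) fun a ha => if_pos (hA a ha)

theorem cmreg_tsub_single_pred_le (hq : 1 ≤ q) (hB : ∀ b ∈ B, b i = q) (hA : ∀ a ∈ A, a i = 0) :
    CMreg K σ (monomialIdeal K ↑((B.image fun b => b - Finsupp.single i (q - 1)) ∪ A)) ≤
      CMreg K σ (monomialIdeal K ↑(B ∪ A)) := by
  let g (s : ℕ) := if s = 0 then 0 else if s ≤ q then 1 else s - (q - 1)
  let f (t : ℕ) := if t = 0 then 0 else t + (q - 1)
  have hgf : GaloisConnection g f := fun s t => by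
    dsimp only [g, f]
    split_ifs <;> omega
  have hg (s : ℕ) : g s ≤ s + 0 := by grind
  exact le_of_le_of_eq (cmreg_tsub_single_le hgf hg hB (by grind) fun a ha => by simp [g, hA a ha])
    (by simp)

theorem cmreg_le_tsub_single_pred_add (hq : 1 ≤ q) (hB : ∀ b ∈ B, b i = q)
    (hA : ∀ a ∈ A, a i = 0) :
    CMreg K σ (monomialIdeal K ↑(B ∪ A)) ≤
      CMreg K σ (monomialIdeal K ↑((B.image fun b => b - Finsupp.single i (q - 1)) ∪ A)) +
        ((q - 1 : ℤ) : WithBot ℤ) := by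
  let g (s : ℕ) := if s = 0 then 0 else s + (q - 1)
  let f (t : ℕ) := if t < q then 0 else t - (q - 1)
  have hgf : GaloisConnection g f := fun s t => by
    dsimp only [g, f]
    split_ifs <;> omega
  have hg (s : ℕ) : g s ≤ s + (q - 1) := by grind
  rw [← Nat.cast_pred hq]
  exact cmreg_le_tsub_single hgf hg hB (by grind) fun a ha => by simp [g, hA a ha]

end Regularity

theorem stmt10_general (K : Type) [Field K] {σ : Type} [Finite σ] [DecidableEq σ]
    (S : Finset (σ →₀ ℕ)) (i : σ) (q p : ℕ) (hq : q = S.sup fun a => a i)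
    (B A : Finset (σ →₀ ℕ)) (hB : B = S.filter fun a => a i = q) (hA : A = S \ B)
    (hp : p = A.sup fun a => a i) (I L L' : Ideal (MvPoly K σ)) (hI : I = monomialIdeal K ↑S)
    (hL : L = monomialIdeal K ↑((B.image fun a => a - Finsupp.single i 1) ∪ A))
    (hL' : L' = monomialIdeal K ↑((B.image fun a => a - Finsupp.single i (q - 1)) ∪ A)) :
    (1 ≤ q → CMreg K σ L ≤ CMreg K σ I) ∧
    (p + 2 ≤ q → CMreg K σ I ≤ CMreg K σ L + 1) ∧
    (p = 0 ∧ 1 ≤ q → CMreg K σ L' ≤ CMreg K σ I ∧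
      CMreg K σ I ≤ CMreg K σ L' + (((q : ℤ) - 1 : ℤ) : WithBot ℤ)) := by
  have hS : S = B ∪ A := by
    rw [hA, Finset.union_sdiff_of_subset (hB ▸ Finset.filter_subset _ _)]
  have hBq : ∀ b ∈ B, b i = q := by simp [hB]
  have hAp : ∀ a ∈ A, a i ≤ p := fun a ha => hp ▸ Finset.le_sup (f := fun a => a i) ha
  have hAq : ∀ a ∈ A, a i < q := fun a ha => by
    rw [hA, Finset.mem_sdiff, hB, Finset.mem_filter] at ha
    have hle : a i ≤ q := hq ▸ Finset.le_sup (f := fun a => a i) ha.1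
    exact hle.lt_of_ne fun h => ha.2 ⟨ha.1, h⟩
  subst hI hL hL'
  rw [hS]
  refine ⟨fun hq => cmreg_tsub_single_one_le hq hBq hAq, fun hpq => ?_, fun ⟨hp, hq⟩ => ?_⟩
  · exact cmreg_le_tsub_single_one_add_one (by omega) hBq fun a ha => by grind
  · have hA0 : ∀ a ∈ A, a i = 0 := fun a ha => Nat.le_zero.mp (hp ▸ hAp a ha)
    exact ⟨cmreg_tsub_single_pred_le hq hBq hA0, cmreg_le_tsub_single_pred_add hq hBq hA0⟩

/-- behaviour of the regularity when lowering the top degree of a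
variable `x_i` in the minimal generators of a monomial ideal `I`. -/
theorem stmt10 (K : Type) [Field K] (n : ℕ) (I : Ideal (MvPoly K (Fin n)))
    (S : Finset (Fin n →₀ ℕ)) (hmin : ∀ a ∈ S, ∀ b ∈ S, a ≤ b → a = b)
    (hI : I = Ideal.span (mono K '' ↑S)) (i : Fin n) (hocc : ∃ a ∈ S, a i ≠ 0)
    (q p : ℕ) (hq : q = S.sup fun a => a i)
    (B A : Finset (Fin n →₀ ℕ))
    (hB : B = S.filter fun a => a i = q) (hA : A = S \ B)
    (hp : p = A.sup fun a => a i)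
    (L L' : Ideal (MvPoly K (Fin n)))
    (hL : L = Ideal.span (mono K '' ↑((B.image fun a => a - Finsupp.single i 1) ∪ A)))
    (hL' : L' =
      Ideal.span (mono K '' ↑((B.image fun a => a - Finsupp.single i (q - 1)) ∪ A))) :
    ((1 ≤ p ∧ p + 2 ≤ q) →
      CMreg K (Fin n) L ≤ CMreg K (Fin n) I ∧
        CMreg K (Fin n) I ≤ CMreg K (Fin n) L + 1) ∧
    (q = p + 1 → CMreg K (Fin n) L ≤ CMreg K (Fin n) I) ∧
    ((p = 0 ∧ 2 ≤ q) →
      CMreg K (Fin n) L' ≤ CMreg K (Fin n) I ∧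
        CMreg K (Fin n) I ≤ CMreg K (Fin n) L' + (((q : ℤ) - 1 : ℤ) : WithBot ℤ)) := by
  obtain ⟨h₁, h₂, h₃⟩ := stmt10_general K S i q p hq B A hB hA hp I L L' hI hL hL'
  exact ⟨fun ⟨_, h⟩ => ⟨h₁ (by omega), h₂ h⟩, fun h => h₁ (by omega),
    fun ⟨hp, _⟩ => h₃ ⟨hp, by omega⟩⟩
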